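/- arXiv:2109.08064 — 7 statements merged into one kernel-verified Lean document; each statement's English description precedes it below -/
import Mathlib

section
/- Let P : Cᵒᵖ → Pos be a Gödel doctrine, and let ψ_D ∈ P(I × U × X) and φ_D ∈ P(I × V × Y) be quantifier-free predicates of P. Then ∃_π ∀_{π'} ψ_D ≤ ∃_ρ ∀_{ρ'} φ_D holds in P(I) (i.e. i:I | ∃u.∀x.ψ_D(i,u,x) ⊢ ∃v.∀y.φ_D(i,v,y)) if and only if there exist arrows f₀ : I × U → V and f₁ : I × U × Y → X of C such that the reindexing of ψ_D along the arrow I × U × Y → I × U × X given by (i,u,y) ↦ (i, u, f₁(i,u,y)) is less than or equal to the reindexing of φ_D along the arrow I × U × Y → I × V × Y given by (i,u,y) ↦ (i, f₀(i,u), y), in the fibre P(I × U × Y). Here π' : I × U × X → I × U, π : I × U → I, ρ' : I × V × Y → I × V, ρ : I × V → I are product projections. -/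
open CategoryTheory MonoidalCategory CartesianMonoidalCategory

universe v u

/-- A doctrine: a (contravariant) functor from a category `C` with finite products
to the category of posets and monotone maps, presented concretely. -/
structure Doctrine (C : Type u) [Category.{v} C] [CartesianMonoidalCategory C] where
  obj : C → Type*
  ord : ∀ A : C, PartialOrder (obj A)
  map : ∀ {A B : C}, (A ⟶ B) → obj B → obj A
  map_mono : ∀ {A B : C} (f : A ⟶ B), Monotone (map f)
  map_id : ∀ {A : C} (α : obj A), map (𝟙 A) α = α
  map_comp : ∀ {A B D : C} (f : A ⟶ B) (g : B ⟶ D) (α : obj D),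
    map (f ≫ g) α = map f (map g α)

attribute [instance] Doctrine.ord

/-- A doctrine that is both existential and universal: reindexing along the two
product projections has both adjoints, satisfying the Beck–Chevalley condition. -/
structure EUDoctrine (C : Type u) [Category.{v} C] [CartesianMonoidalCategory C]
    extends Doctrine C where
  ex1 : ∀ {A B : C}, obj (A ⊗ B) → obj A
  ex1_gc : ∀ (A B : C), GaloisConnection (ex1 (A := A) (B := B)) (map (fst A B))
  ex2 : ∀ {A B : C}, obj (A ⊗ B) → obj B
  ex2_gc : ∀ (A B : C), GaloisConnection (ex2 (A := A) (B := B)) (map (snd A B))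
  ex1_bc : ∀ {A A' B : C} (f : A' ⟶ A) (β : obj (A ⊗ B)),
    ex1 (map (f ⊗ₘ 𝟙 B) β) = map f (ex1 β)
  ex2_bc : ∀ {A B B' : C} (f : B' ⟶ B) (β : obj (A ⊗ B)),
    ex2 (map (𝟙 A ⊗ₘ f) β) = map f (ex2 β)
  all1 : ∀ {A B : C}, obj (A ⊗ B) → obj A
  all1_gc : ∀ (A B : C), GaloisConnection (map (fst A B)) (all1 (A := A) (B := B))
  all2 : ∀ {A B : C}, obj (A ⊗ B) → obj B
  all2_gc : ∀ (A B : C), GaloisConnection (map (snd A B)) (all2 (A := A) (B := B))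
  all1_bc : ∀ {A A' B : C} (f : A' ⟶ A) (β : obj (A ⊗ B)),
    all1 (map (f ⊗ₘ 𝟙 B) β) = map f (all1 β)
  all2_bc : ∀ {A B B' : C} (f : B' ⟶ B) (β : obj (A ⊗ B)),
    all2 (map (𝟙 A ⊗ₘ f) β) = map f (all2 β)

namespace EUDoctrine

variable {C : Type u} [Category.{v} C] [CartesianMonoidalCategory C] (D : EUDoctrine C)

/-- `α` is an existential splitting: whenever `α ≤ ∃_{π_A} β` there is `g : A ⟶ B`
with `α ≤ P_⟨1_A, g⟩ β`. -/
def ExSplitting {A : C} (α : D.obj A) : Prop :=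
  ∀ (B : C) (β : D.obj (A ⊗ B)), α ≤ D.ex1 β →
    ∃ g : A ⟶ B, α ≤ D.map (lift (𝟙 A) g) β

/-- `α` is existential-free: every reindexing of `α` is an existential splitting. -/
def ExFree {I : C} (α : D.obj I) : Prop :=
  ∀ (A : C) (f : A ⟶ I), D.ExSplitting (D.map f α)

/-- `α` is a universal splitting in the subdoctrine of existential-free predicates. -/
def UnivSplittingSub {A : C} (α : D.obj A) : Prop :=
  ∀ (B : C) (β : D.obj (A ⊗ B)), D.ExFree β → D.all1 β ≤ α →
    ∃ g : A ⟶ B, D.map (lift (𝟙 A) g) β ≤ α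

/-- `α` is universal-free in the subdoctrine of existential-free predicates. -/
def UnivFreeSub {I : C} (α : D.obj I) : Prop :=
  ∀ (A : C) (f : A ⟶ I), D.UnivSplittingSub (D.map f α)

/-- `α` is quantifier-free: existential-free and universal-free in the subdoctrine of
existential-free predicates. -/
def QFree {I : C} (α : D.obj I) : Prop := D.ExFree α ∧ D.UnivFreeSub α

end EUDoctrine

/-- A Gödel doctrine. -/
structure GoedelDoctrine (C : Type u) [Category.{v} C] [CartesianMonoidalCategory C]
    [MonoidalClosed C] extends EUDoctrine C where
  enough_exFree : ∀ (I : C) (α : obj I), ∃ (A : C) (β : obj (I ⊗ A)),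
    toEUDoctrine.ExFree β ∧ α = ex1 β
  exFree_all1 : ∀ {A B : C} (α : obj (A ⊗ B)),
    toEUDoctrine.ExFree α → toEUDoctrine.ExFree (all1 α)
  exFree_all2 : ∀ {A B : C} (α : obj (A ⊗ B)),
    toEUDoctrine.ExFree α → toEUDoctrine.ExFree (all2 α)
  enough_univFree : ∀ (I : C) (α : obj I), toEUDoctrine.ExFree α →
    ∃ (A : C) (β : obj (I ⊗ A)), toEUDoctrine.ExFree β ∧ toEUDoctrine.UnivFreeSub β ∧
      α = all1 β

/-- **Dialectica interpretation of implication in a Gödel doctrine** (Theorem 2): for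
quantifier-free predicates `ψ_D ∈ P(I × U × X)` and `φ_D ∈ P(I × V × Y)`, one has
`i:I | ∃u.∀x.ψ_D(i,u,x) ⊢ ∃v.∀y.φ_D(i,v,y)` iff there exist a witness function
`f₀ : I × U ⟶ V` and a counterexample function `f₁ : I × U × Y ⟶ X` with
`ψ_D(i,u,f₁(i,u,y)) ⊢ φ_D(i,f₀(i,u),y)`. -/
theorem GoedelDoctrine.dialectica_implication {C : Type u} [Category.{v} C]
    [CartesianMonoidalCategory C] [MonoidalClosed C] (D : GoedelDoctrine C)
    {I U X V Y : C}
    (ψ : D.obj ((I ⊗ U) ⊗ X)) (φ : D.obj ((I ⊗ V) ⊗ Y))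
    (hψ : D.toEUDoctrine.QFree ψ) (hφ : D.toEUDoctrine.QFree φ) :
    D.ex1 (D.all1 ψ) ≤ D.ex1 (D.all1 φ) ↔
      ∃ (f₀ : I ⊗ U ⟶ V) (f₁ : (I ⊗ U) ⊗ Y ⟶ X),
        D.map (lift (fst (I ⊗ U) Y) f₁) ψ ≤ D.map (lift (fst I U) f₀ ⊗ₘ 𝟙 Y) φ := by
  have key0 : ∀ f₀ : I ⊗ U ⟶ V,
      D.map (lift (𝟙 (I ⊗ U)) f₀) (D.map (fst I U ⊗ₘ 𝟙 V) (D.all1 φ))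
        = D.all1 (D.map (lift (fst I U) f₀ ⊗ₘ 𝟙 Y) φ) := by
    intro f₀
    rw [D.all1_bc, ← D.map_comp]
    simp
  have key1 : ∀ f₁ : (I ⊗ U) ⊗ Y ⟶ X,
      D.map (lift (𝟙 ((I ⊗ U) ⊗ Y)) f₁) (D.map (fst (I ⊗ U) Y ⊗ₘ 𝟙 X) ψ)
        = D.map (lift (fst (I ⊗ U) Y) f₁) ψ := by
    intro f₁
    rw [← D.map_comp]
    simp
  rw [D.ex1_gc _ _ _ _, ← D.ex1_bc]
  constructor
  · intro h
    have hs := D.exFree_all1 ψ hψ.1 _ (𝟙 _)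
    rw [D.map_id] at hs
    obtain ⟨f₀, h₀⟩ := hs _ _ h
    rw [key0, ← D.all1_gc _ _ _ _, ← D.all1_bc] at h₀
    have hfree : D.toEUDoctrine.ExFree (D.map (fst (I ⊗ U) Y ⊗ₘ 𝟙 X) ψ) := by
      intro A f
      rw [← D.map_comp]
      exact hψ.1 A _
    obtain ⟨f₁, h₁⟩ := hφ.2 _ (lift (fst I U) f₀ ⊗ₘ 𝟙 Y) _ _ hfree h₀
    rw [key1] at h₁
    exact ⟨f₀, f₁, h₁⟩
  · rintro ⟨f₀, f₁, h⟩
    have h₀ : D.all1 ψ ≤ D.all1 (D.map (lift (fst I U) f₀ ⊗ₘ 𝟙 Y) φ) := by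
      rw [← D.all1_gc _ _ _ _]
      refine le_trans ?_ h
      have := D.map_mono (lift (fst (I ⊗ U) Y) f₁) ((D.all1_gc _ _).l_u_le ψ)
      rwa [← D.map_comp, lift_fst] at this
    rw [← key0] at h₀
    refine h₀.trans ?_
    have := D.map_mono (lift (𝟙 _) f₀)
      ((D.ex1_gc _ _).le_u_l (D.map (fst I U ⊗ₘ 𝟙 V) (D.all1 φ)))
    rwa [← D.map_comp (lift (𝟙 _) f₀) (fst _ _), lift_fst, D.map_id] at this
end

section
/- Every Gödel doctrine P : Cᵒᵖ → Pos validates the Skolemisation principle: for all objects A₁, A₂, B of C and every α ∈ P(A₁ × A₂ × B), the equality ∀_π (∃_{π'} α) = ∃_ρ (∀_{ρ'} P_e α) holds in P(A₁), i.e. a₁:A₁ | ∀a₂.∃b.α(a₁,a₂,b) ⊣⊢ ∃f.∀a₂.α(a₁,a₂,f a₂). Here π : A₁ × A₂ → A₁ and π' : A₁ × A₂ × B → A₁ × A₂ are product projections; B^{A₂} is the exponential object with evaluation ev : B^{A₂} × A₂ → B; ρ : A₁ × B^{A₂} → A₁ and ρ' : A₁ × B^{A₂} × A₂ → A₁ ×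 B^{A₂} are product projections; and e : A₁ × B^{A₂} × A₂ → A₁ × A₂ × B is the arrow (a₁, f, a₂) ↦ (a₁, a₂, ev(f, a₂)). -/
open CategoryTheory MonoidalCategory CartesianMonoidalCategory
open scoped CartesianClosed

universe v u

/-- **Skolemisation in a Gödel doctrine** (Theorem 3): for every `α ∈ P(A₁ × A₂ × B)`,
`a₁:A₁ | ∀a₂.∃b.α(a₁,a₂,b) ⊣⊢ ∃f.∀a₂.α(a₁,a₂,f a₂)`, where `f` ranges over the
exponential `B^{A₂}` and the right-hand side reindexes `α` along
`e : (a₁, f, a₂) ↦ (a₁, a₂, ev(f, a₂))`. -/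
theorem GoedelDoctrine.skolemisation {C : Type u} [Category.{v} C]
    [CartesianMonoidalCategory C] [MonoidalClosed C] (D : GoedelDoctrine C)
    (A₁ A₂ B : C) (α : D.obj ((A₁ ⊗ A₂) ⊗ B)) :
    D.all1 (D.ex1 α) =
      D.ex1 (D.all1 (D.map
        (lift (lift (fst (A₁ ⊗ (A₂ ⟹ B)) A₂ ≫ fst A₁ (A₂ ⟹ B))
            (snd (A₁ ⊗ (A₂ ⟹ B)) A₂))
          (lift (snd (A₁ ⊗ (A₂ ⟹ B)) A₂)
            (fst (A₁ ⊗ (A₂ ⟹ B)) A₂ ≫ snd A₁ (A₂ ⟹ B)) ≫ (ihom.ev A₂).app B)) α)) := by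
  apply le_antisymm
  · obtain ⟨X, β, hβ, hγ⟩ := D.enough_exFree A₁ (D.all1 (D.ex1 α))
    have h1 : β ≤ D.map (fst A₁ X) (D.all1 (D.ex1 α)) := by
      rw [hγ]; exact (D.ex1_gc _ _).le_u_l β
    rw [← D.all1_bc] at h1
    have h2 := (D.all1_gc _ _ _ _).2 h1
    rw [← D.ex1_bc] at h2
    obtain ⟨g, hg⟩ := hβ _ _ _ _ h2
    rw [← D.map_comp] at hg
    rw [hγ]
    refine (D.ex1_gc _ _ _ _).2 ?_
    let h : A₁ ⊗ X ⟶ (A₂ ⟹ B) :=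
      MonoidalClosed.curry (lift (snd A₂ (A₁ ⊗ X)) (fst A₂ (A₁ ⊗ X)) ≫ g)
    have key : (lift (snd (A₁ ⊗ X) A₂) (fst (A₁ ⊗ X) A₂ ≫ h)) ≫ (ihom.ev A₂).app B = g := by
      have e1 : lift (snd (A₁ ⊗ X) A₂) (fst (A₁ ⊗ X) A₂ ≫ h) =
          lift (snd (A₁ ⊗ X) A₂) (fst (A₁ ⊗ X) A₂) ≫ (A₂ ◁ h) := by
        ext <;> simp
      rw [e1, Category.assoc, ← MonoidalClosed.uncurry_eq, MonoidalClosed.uncurry_curry,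
        ← Category.assoc]
      have e2 : lift (snd (A₁ ⊗ X) A₂) (fst (A₁ ⊗ X) A₂) ≫
          lift (snd A₂ (A₁ ⊗ X)) (fst A₂ (A₁ ⊗ X)) = 𝟙 _ := by
        ext <;> simp
      rw [e2, Category.id_comp]
    have e3 : fst A₁ X = lift (fst A₁ X) h ≫ fst A₁ (A₂ ⟹ B) := by simp
    have h3 := D.map_mono (lift (fst A₁ X) h) ((D.ex1_gc _ _).le_u_l
      (D.all1 (D.map
        (lift (lift (fst (A₁ ⊗ (A₂ ⟹ B)) A₂ ≫ fst A₁ (A₂ ⟹ B))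
            (snd (A₁ ⊗ (A₂ ⟹ B)) A₂))
          (lift (snd (A₁ ⊗ (A₂ ⟹ B)) A₂)
            (fst (A₁ ⊗ (A₂ ⟹ B)) A₂ ≫ snd A₁ (A₂ ⟹ B)) ≫ (ihom.ev A₂).app B)) α)))
    rw [← D.map_comp, ← e3] at h3
    refine le_trans ?_ h3
    rw [← D.all1_bc, ← D.map_comp]
    refine (D.all1_gc _ _ _ _).1 (hg.trans (le_of_eq ?_))
    congr 1
    ext
    · simp
    · simp
    · simp only [comp_lift, lift_snd]
      rw [← Category.assoc, comp_lift]
      simp [key]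
  · refine (D.ex1_gc _ _ _ _).2 ?_
    rw [← D.all1_bc]
    refine (D.all1_gc _ _).monotone_u ?_
    refine (D.map_mono _ ((D.ex1_gc _ _).le_u_l α)).trans (le_of_eq ?_)
    rw [← D.map_comp]
    congr 1
    ext <;> simp
end

section
/- Let P : Cᵒᵖ → Pos be a Skolem doctrine, i.e. a doctrine such that: (1) C is cartesian closed; (2) P is existential and universal; (3) P has enough existential-free predicates; (4) existential-free predicates are stable under the universal quantifiers ∀_π along projections (but condition (5) of a Gödel doctrine is not assumed). Then P validates the Skolemisation principle: for all objects A₁, A₂, B of C and every α ∈ P(A₁ × A₂ × B), the equality ∀_π (∃_{π'} α) = ∃_ρ (∀_{ρ'} P_e α) holds in P(A₁), where π : A₁ × A₂ → A₁, π' : A₁ × A₂ × B → A₁ × A₂, ρ : A₁ × B^{A₂} → A₁, ρ' : A₁ × B^{A₂} × A₂ → A₁ × B^{A₂} are product projections, B^{A₂} is the exponential with evaluation ev : B^{A₂} × A₂ → B, and e : A₁ × B^{A₂} × A₂ → A₁ × A₂ × B is the arrow (a₁, f, a₂) ↦ (a₁, a₂, ev(f, a₂)). -/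
open CategoryTheory MonoidalCategory CartesianMonoidalCategory CartesianClosed

universe v u

/-- A Skolem doctrine: all the conditions of a Gödel doctrine except for the requirement
that the subdoctrine of existential-free predicates has enough universal-free predicates. -/
structure SkolemDoctrine (C : Type u) [Category.{v} C] [CartesianMonoidalCategory C]
    [MonoidalClosed C] extends EUDoctrine C where
  enough_exFree : ∀ (I : C) (α : obj I), ∃ (A : C) (β : obj (I ⊗ A)),
    toEUDoctrine.ExFree β ∧ α = ex1 β
  exFree_all1 : ∀ {A B : C} (α : obj (A ⊗ B)),
    toEUDoctrine.ExFree α → toEUDoctrine.ExFree (all1 α)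
  exFree_all2 : ∀ {A B : C} (α : obj (A ⊗ B)),
    toEUDoctrine.ExFree α → toEUDoctrine.ExFree (all2 α)

/-- **Skolemisation in a Skolem doctrine** (Remark 1): the Skolemisation principle
`a₁:A₁ | ∀a₂.∃b.α(a₁,a₂,b) ⊣⊢ ∃f.∀a₂.α(a₁,a₂,f a₂)` already holds in any Skolem doctrine,
i.e. condition (5) of a Gödel doctrine is not needed. -/
theorem SkolemDoctrine.skolemisation {C : Type u} [Category.{v} C]
    [CartesianMonoidalCategory C] [MonoidalClosed C] (D : SkolemDoctrine C)
    (A₁ A₂ B : C) (α : D.obj ((A₁ ⊗ A₂) ⊗ B)) :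
    D.all1 (D.ex1 α) =
      D.ex1 (D.all1 (D.map
        (lift (lift (fst (A₁ ⊗ (A₂ ⟹ B)) A₂ ≫ fst A₁ (A₂ ⟹ B))
            (snd (A₁ ⊗ (A₂ ⟹ B)) A₂))
          (lift (snd (A₁ ⊗ (A₂ ⟹ B)) A₂)
            (fst (A₁ ⊗ (A₂ ⟹ B)) A₂ ≫ snd A₁ (A₂ ⟹ B)) ≫ (ihom.ev A₂).app B)) α)) := by
  set e := (lift (lift (fst (A₁ ⊗ (A₂ ⟹ B)) A₂ ≫ fst A₁ (A₂ ⟹ B))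
            (snd (A₁ ⊗ (A₂ ⟹ B)) A₂))
          (lift (snd (A₁ ⊗ (A₂ ⟹ B)) A₂)
            (fst (A₁ ⊗ (A₂ ⟹ B)) A₂ ≫ snd A₁ (A₂ ⟹ B)) ≫ (ihom.ev A₂).app B)) with he
  apply le_antisymm
  · obtain ⟨X, γ, hγ, hEq⟩ := D.enough_exFree A₁ (D.all1 (D.ex1 α))
    rw [hEq]
    apply (D.ex1_gc _ _).l_le
    have h1 : γ ≤ D.map (fst A₁ X) (D.all1 (D.ex1 α)) := by
      rw [hEq]; exact (D.ex1_gc _ _).le_u_l γ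
    rw [← D.all1_bc] at h1
    have h2 := (D.all1_gc _ _).l_le h1
    rw [← D.ex1_bc] at h2
    obtain ⟨g, hg⟩ := hγ _ _ _ _ h2
    rw [← D.map_comp] at hg
    have h3 := (D.all1_gc _ _).le_u hg
    let h : A₁ ⊗ X ⟶ (A₂ ⟹ B) := MonoidalClosed.curry (lift (snd _ _) (fst _ _) ≫ g)
    have hh : lift (snd (A₁ ⊗ X) A₂) (fst _ _ ≫ h) ≫ (ihom.ev A₂).app B = g := by
      have : lift (snd (A₁ ⊗ X) A₂) (fst _ _ ≫ h)
          = lift (snd _ _) (fst _ _) ≫ (A₂ ◁ h) := by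
        ext <;> simp
      rw [this, Category.assoc, ← MonoidalClosed.uncurry_eq, MonoidalClosed.uncurry_curry,
        ← Category.assoc]
      have : lift (snd (A₁ ⊗ X) A₂) (fst _ _) ≫ lift (snd _ _) (fst _ _) = 𝟙 _ := by
        ext <;> simp
      rw [this, Category.id_comp]
    have key : lift (𝟙 ((A₁ ⊗ X) ⊗ A₂)) g ≫ ((fst A₁ X ⊗ₘ 𝟙 A₂) ⊗ₘ 𝟙 B)
        = (lift (fst A₁ X) h ⊗ₘ 𝟙 A₂) ≫ e := by
      have h5 : (lift (fst A₁ X) h ⊗ₘ 𝟙 A₂) ≫ lift (snd (A₁ ⊗ (A₂ ⟹ B)) A₂)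
            (fst (A₁ ⊗ (A₂ ⟹ B)) A₂ ≫ snd A₁ (A₂ ⟹ B))
          = lift (snd (A₁ ⊗ X) A₂) (fst _ _ ≫ h) := by
        ext <;> simp
      apply CartesianMonoidalCategory.hom_ext
      · rw [he]
        ext <;> simp
      · rw [he, Category.assoc, Category.assoc, lift_snd, ← Category.assoc
          (lift (fst A₁ X) h ⊗ₘ 𝟙 A₂), h5, hh]
        simp
    rw [key, D.map_comp, D.all1_bc] at h3
    refine h3.trans ?_
    refine (D.map_mono _ ((D.ex1_gc _ _).le_u_l _)).trans ?_
    rw [← D.map_comp, lift_fst]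
  · apply (D.ex1_gc _ _).l_le
    rw [← D.all1_bc]
    apply (D.all1_gc _ _).le_u
    refine ((D.all1_gc _ _).l_u_le _).trans ?_
    refine (D.map_mono _ ((D.ex1_gc _ _).le_u_l α)).trans ?_
    rw [← D.map_comp]
    have : e ≫ fst _ _ = (fst A₁ (A₂ ⟹ B) ⊗ₘ 𝟙 A₂) := by
      rw [he]
      ext <;> simp
    exact (congrArg (fun k => D.map k (D.ex1 α)) this).le
end

section
/- Let P : Cᵒᵖ → Pos be a Gödel doctrine and let P' be its subdoctrine of quantifier-free predicates. For an object I of C, let Dial(P')(I) be the preorder whose elements are triples (U, X, α) with U, X objects of C and α a quantifier-free predicate in P(I × U × X), and where (U, X, α) ≤ (V, Y, β) if and only if there exist arrows f₀ : I × U → V and f₁ : I × U × Y → X such that the reindexing of α along (i,u,y) ↦ (i, u, f₁(i,u,y)) is ≤ the reindexing of β along (i,u,y) ↦ (i, f₀(i,u), y) in P(I × U × Y). Then the assignment (U, X, α) ↦ ∃_π ∀_{π'} α (with π' : I × U × X → I × U and π : I × U → I the projections) defines an equivalence of preorders between Dial(P')(I) and P(I): it is monotone, order-reflecting ((U,X,α)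 ≤ (V,Y,β) if and only if ∃_π ∀_{π'} α ≤ ∃_ρ ∀_{ρ'} β in P(I)), and surjective onto P(I). -/
open CategoryTheory MonoidalCategory CartesianMonoidalCategory

universe v u

/-- **Every Gödel doctrine is a Dialectica completion** (Theorem 4): for every object `I`, the
assignment `(U, X, α) ↦ ∃_π ∀_{π'} α` from the Dialectica preorder `Dial(P')(I)` of triples
`(U, X, α)` (with `α` a quantifier-free predicate in `P(I × U × X)`, ordered by the existence of
witness/counterexample morphisms `f₀, f₁`) to `P(I)` is monotone, order-reflecting and
surjective, hence an equivalence of preorders. -/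
theorem GoedelDoctrine.dialectica_completion {C : Type u} [Category.{v} C]
    [CartesianMonoidalCategory C] [MonoidalClosed C] (D : GoedelDoctrine C) (I : C) :
    -- monotonicity and order-reflection: the Dialectica order on triples corresponds
    -- exactly to the order of the images in `P(I)`
    (∀ (U X V Y : C) (α : D.obj ((I ⊗ U) ⊗ X)) (β : D.obj ((I ⊗ V) ⊗ Y)),
      D.toEUDoctrine.QFree α → D.toEUDoctrine.QFree β →
        ((∃ (f₀ : I ⊗ U ⟶ V) (f₁ : (I ⊗ U) ⊗ Y ⟶ X),
            D.map (lift (fst (I ⊗ U) Y) f₁) α ≤ D.map (lift (fst I U) f₀ ⊗ₘ 𝟙 Y) β) ↔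
          D.ex1 (D.all1 α) ≤ D.ex1 (D.all1 β))) ∧
    -- surjectivity onto `P(I)`
    (∀ γ : D.obj I, ∃ (U X : C) (α : D.obj ((I ⊗ U) ⊗ X)),
      D.toEUDoctrine.QFree α ∧ γ = D.ex1 (D.all1 α)) := by
  refine ⟨?_, ?_⟩
  · intro U X V Y α β hα hβ
    constructor
    · rintro ⟨f₀, f₁, h⟩
      apply (D.ex1_gc _ _).l_le
      have h1 : D.map (fst (I ⊗ U) Y) (D.all1 α) ≤ D.map (lift (fst (I ⊗ U) Y) f₁) α := by
        have h2 := D.map_mono (lift (fst (I ⊗ U) Y) f₁) ((D.all1_gc _ _).l_u_le α)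
        rwa [← D.map_comp, lift_fst] at h2
      have h3 := (D.all1_gc _ _).le_u (h1.trans h)
      rw [D.all1_bc] at h3
      refine h3.trans ?_
      have h4 := D.map_mono (lift (fst I U) f₀) ((D.ex1_gc _ _).le_u_l (D.all1 β))
      rwa [← D.map_comp, lift_fst] at h4
    · intro h
      have h1 : D.all1 α ≤ D.ex1 (D.map (fst I U ⊗ₘ 𝟙 V) (D.all1 β)) := by
        rw [D.ex1_bc]
        exact (D.ex1_gc _ _).le_u h
      have hs := D.exFree_all1 α hα.1 _ (𝟙 _)
      rw [D.map_id] at hs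
      obtain ⟨f₀, h2⟩ := hs _ _ h1
      rw [← D.map_comp, lift_map, Category.id_comp, Category.comp_id, ← D.all1_bc] at h2
      have h3 := (D.all1_gc _ _).l_le h2
      rw [← D.all1_bc] at h3
      have hf : D.toEUDoctrine.ExFree (D.map (fst (I ⊗ U) Y ⊗ₘ 𝟙 X) α) := by
        intro A f
        rw [← D.map_comp]
        exact hα.1 A _
      obtain ⟨f₁, h4⟩ := hβ.2 _ (lift (fst I U) f₀ ⊗ₘ 𝟙 Y) _ _ hf h3
      rw [← D.map_comp, lift_map, Category.id_comp, Category.comp_id] at h4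
      exact ⟨f₀, f₁, h4⟩
  · intro γ
    obtain ⟨U, β, hβ, rfl⟩ := D.enough_exFree I γ
    obtain ⟨X, α, h1, h2, rfl⟩ := D.enough_univFree _ β hβ
    exact ⟨U, X, α, ⟨h1, h2⟩, rfl⟩
end

section
/- Every Gödel hyperdoctrine P : Cᵒᵖ → Hey satisfies the Rule of Independence of Premise: for all objects A, B of C, every β ∈ P(A × B) and every existential-free predicate α ∈ P(A), if ⊤ ≤ α → ∃_{π_A} β holds in P(A) (i.e. a:A | ⊤ ⊢ α(a) → ∃b.β(a,b)), then ⊤ ≤ ∃_{π_A} (P_{π_A} α → β) holds in P(A) (i.e. a:A | ⊤ ⊢ ∃b.(α(a) → β(a,b))), where π_A : A × B → A is the product projection. -/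
open CategoryTheory MonoidalCategory CartesianMonoidalCategory

universe v u

/-- A hyperdoctrine: a (contravariant) functor from a category `C` with finite products
to the category of Heyting algebras and Heyting algebra homomorphisms,
presented concretely. -/
structure Hyperdoctrine (C : Type u) [Category.{v} C] [CartesianMonoidalCategory C] where
  obj : C → Type*
  hey : ∀ A : C, HeytingAlgebra (obj A)
  map : ∀ {A B : C}, (A ⟶ B) → obj B → obj A
  map_mono : ∀ {A B : C} (f : A ⟶ B), Monotone (map f)
  map_id : ∀ {A : C} (α : obj A), map (𝟙 A) α = α
  map_comp : ∀ {A B D : C} (f : A ⟶ B) (g : B ⟶ D) (α : obj D),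
    map (f ≫ g) α = map f (map g α)
  map_inf : ∀ {A B : C} (f : A ⟶ B) (x y : obj B), map f (x ⊓ y) = map f x ⊓ map f y
  map_sup : ∀ {A B : C} (f : A ⟶ B) (x y : obj B), map f (x ⊔ y) = map f x ⊔ map f y
  map_top : ∀ {A B : C} (f : A ⟶ B), map f ⊤ = ⊤
  map_bot : ∀ {A B : C} (f : A ⟶ B), map f ⊥ = ⊥
  map_himp : ∀ {A B : C} (f : A ⟶ B) (x y : obj B), map f (x ⇨ y) = map f x ⇨ map f y

attribute [instance] Hyperdoctrine.hey

/-- A hyperdoctrine that is both existential and universal: reindexing along the two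
product projections has both adjoints, satisfying the Beck–Chevalley condition. -/
structure EUHyperdoctrine (C : Type u) [Category.{v} C] [CartesianMonoidalCategory C]
    extends Hyperdoctrine C where
  ex1 : ∀ {A B : C}, obj (A ⊗ B) → obj A
  ex1_gc : ∀ (A B : C), GaloisConnection (ex1 (A := A) (B := B)) (map (fst A B))
  ex2 : ∀ {A B : C}, obj (A ⊗ B) → obj B
  ex2_gc : ∀ (A B : C), GaloisConnection (ex2 (A := A) (B := B)) (map (snd A B))
  ex1_bc : ∀ {A A' B : C} (f : A' ⟶ A) (β : obj (A ⊗ B)),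
    ex1 (map (f ⊗ₘ 𝟙 B) β) = map f (ex1 β)
  ex2_bc : ∀ {A B B' : C} (f : B' ⟶ B) (β : obj (A ⊗ B)),
    ex2 (map (𝟙 A ⊗ₘ f) β) = map f (ex2 β)
  all1 : ∀ {A B : C}, obj (A ⊗ B) → obj A
  all1_gc : ∀ (A B : C), GaloisConnection (map (fst A B)) (all1 (A := A) (B := B))
  all2 : ∀ {A B : C}, obj (A ⊗ B) → obj B
  all2_gc : ∀ (A B : C), GaloisConnection (map (snd A B)) (all2 (A := A) (B := B))
  all1_bc : ∀ {A A' B : C} (f : A' ⟶ A) (β : obj (A ⊗ B)),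
    all1 (map (f ⊗ₘ 𝟙 B) β) = map f (all1 β)
  all2_bc : ∀ {A B B' : C} (f : B' ⟶ B) (β : obj (A ⊗ B)),
    all2 (map (𝟙 A ⊗ₘ f) β) = map f (all2 β)

namespace EUHyperdoctrine

variable {C : Type u} [Category.{v} C] [CartesianMonoidalCategory C] (D : EUHyperdoctrine C)

/-- `α` is an existential splitting: whenever `α ≤ ∃_{π_A} β` there is `g : A ⟶ B`
with `α ≤ P_⟨1_A, g⟩ β`. -/
def ExSplitting {A : C} (α : D.obj A) : Prop :=
  ∀ (B : C) (β : D.obj (A ⊗ B)), α ≤ D.ex1 β →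
    ∃ g : A ⟶ B, α ≤ D.map (lift (𝟙 A) g) β

/-- `α` is existential-free: every reindexing of `α` is an existential splitting. -/
def ExFree {I : C} (α : D.obj I) : Prop :=
  ∀ (A : C) (f : A ⟶ I), D.ExSplitting (D.map f α)

/-- `α` is a universal splitting in the subdoctrine of existential-free predicates. -/
def UnivSplittingSub {A : C} (α : D.obj A) : Prop :=
  ∀ (B : C) (β : D.obj (A ⊗ B)), D.ExFree β → D.all1 β ≤ α →
    ∃ g : A ⟶ B, D.map (lift (𝟙 A) g) β ≤ α

/-- `α` is universal-free in the subdoctrine of existential-free predicates. -/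
def UnivFreeSub {I : C} (α : D.obj I) : Prop :=
  ∀ (A : C) (f : A ⟶ I), D.UnivSplittingSub (D.map f α)

/-- `α` is quantifier-free: existential-free and universal-free in the subdoctrine of
existential-free predicates. -/
def QFree {I : C} (α : D.obj I) : Prop := D.ExFree α ∧ D.UnivFreeSub α

end EUHyperdoctrine

/-- A Gödel hyperdoctrine: a Gödel doctrine whose fibres are Heyting algebras and whose
reindexing maps are Heyting algebra homomorphisms. -/
structure GoedelHyperdoctrine (C : Type u) [Category.{v} C] [CartesianMonoidalCategory C]
    [MonoidalClosed C] extends EUHyperdoctrine C where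
  enough_exFree : ∀ (I : C) (α : obj I), ∃ (A : C) (β : obj (I ⊗ A)),
    toEUHyperdoctrine.ExFree β ∧ α = ex1 β
  exFree_all1 : ∀ {A B : C} (α : obj (A ⊗ B)),
    toEUHyperdoctrine.ExFree α → toEUHyperdoctrine.ExFree (all1 α)
  exFree_all2 : ∀ {A B : C} (α : obj (A ⊗ B)),
    toEUHyperdoctrine.ExFree α → toEUHyperdoctrine.ExFree (all2 α)
  enough_univFree : ∀ (I : C) (α : obj I), toEUHyperdoctrine.ExFree α →
    ∃ (A : C) (β : obj (I ⊗ A)), toEUHyperdoctrine.ExFree β ∧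
      toEUHyperdoctrine.UnivFreeSub β ∧ α = all1 β

/-- **Rule of Independence of Premise** (Theorem 5): in a Gödel hyperdoctrine, for every
existential-free `α ∈ P(A)` and every `β ∈ P(A × B)`, if `a:A | ⊤ ⊢ α(a) → ∃b.β(a,b)`
then `a:A | ⊤ ⊢ ∃b.(α(a) → β(a,b))`. -/
theorem GoedelHyperdoctrine.independence_of_premise {C : Type u} [Category.{v} C]
    [CartesianMonoidalCategory C] [MonoidalClosed C] (D : GoedelHyperdoctrine C)
    {A B : C} (α : D.obj A) (β : D.obj (A ⊗ B))
    (hα : D.toEUHyperdoctrine.ExFree α)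
    (h : ⊤ ≤ α ⇨ D.ex1 β) :
    ⊤ ≤ D.ex1 (D.map (fst A B) α ⇨ β) := by
  have h1 : α ≤ D.ex1 β := by
    have := le_himp_iff.mp h
    rwa [top_inf_eq] at this
  obtain ⟨g, hg⟩ := hα A (𝟙 A) B β (by rw [D.map_id]; exact h1)
  rw [D.map_id] at hg
  have h2 := D.map_mono (lift (𝟙 A) g)
    ((D.ex1_gc A B).le_u_l (D.map (fst A B) α ⇨ β))
  rw [← D.map_comp, lift_fst, D.map_id, D.map_himp, ← D.map_comp, lift_fst, D.map_id] at h2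
  refine le_trans ?_ h2
  rw [le_himp_iff, top_inf_eq]
  exact hg
end

section
/- Every Gödel hyperdoctrine P : Cᵒᵖ → Hey satisfies the Modified Markov's Rule: for all objects A, B of C, every quantifier-free predicate β_D ∈ P(A) and every existential-free predicate α ∈ P(A × B), if ⊤ ≤ (∀_{π_A} α) → β_D holds in P(A) (i.e. a:A | ⊤ ⊢ (∀b.α(a,b)) → β_D(a)), then ⊤ ≤ ∃_{π_A} (α → P_{π_A} β_D) holds in P(A) (i.e. a:A | ⊤ ⊢ ∃b.(α(a,b) → β_D(a))), where π_A : A × B → A is the product projection. -/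
open CategoryTheory MonoidalCategory CartesianMonoidalCategory

universe v u

/-- **Modified Markov's Rule** (Theorem 6): in a Gödel hyperdoctrine, for every
quantifier-free `β_D ∈ P(A)` and every existential-free `α ∈ P(A × B)`, if
`a:A | ⊤ ⊢ (∀b.α(a,b)) → β_D(a)` then `a:A | ⊤ ⊢ ∃b.(α(a,b) → β_D(a))`. -/
theorem GoedelHyperdoctrine.modified_markov_rule {C : Type u} [Category.{v} C]
    [CartesianMonoidalCategory C] [MonoidalClosed C] (D : GoedelHyperdoctrine C)
    {A B : C} (βD : D.obj A) (α : D.obj (A ⊗ B))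
    (hβ : D.toEUHyperdoctrine.QFree βD)
    (hα : D.toEUHyperdoctrine.ExFree α)
    (h : ⊤ ≤ D.all1 α ⇨ βD) :
    ⊤ ≤ D.ex1 (α ⇨ D.map (fst A B) βD) := by
  have h1 : D.all1 α ≤ D.map (𝟙 A) βD := by
    rw [D.map_id]
    simpa using le_himp_iff.mp h
  obtain ⟨g, hg⟩ := hβ.2 A (𝟙 A) B α hα h1
  rw [D.map_id] at hg
  have key : ∀ γ : D.obj A, D.map (lift (𝟙 A) g) (D.map (fst A B) γ) = γ := by
    intro γ
    rw [← D.map_comp, lift_fst, D.map_id]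
  have h2 := D.map_mono (lift (𝟙 A) g)
    ((D.ex1_gc A B).le_u_l (α ⇨ D.map (fst A B) βD))
  rw [key, D.map_himp, key] at h2
  refine le_trans ?_ h2
  rw [le_himp_iff]
  exact le_trans inf_le_right hg
end

section
/- Every Gödel hyperdoctrine P : Cᵒᵖ → Hey in which the bottom element ⊥ of each fibre is a quantifier-free predicate satisfies Markov's Rule: for all objects A, B of C and every quantifier-free predicate α_D ∈ P(A × B), if ⊤ ≤ ¬ ∀_{π_B} α_D holds in P(B) (i.e. b:B | ⊤ ⊢ ¬∀a.α_D(a,b)), then ⊤ ≤ ∃_{π_B} (¬ α_D) holds in P(B) (i.e. b:B | ⊤ ⊢ ∃a.¬α_D(a,b)), where π_B : A × B → B is the product projection. -/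
open CategoryTheory MonoidalCategory CartesianMonoidalCategory

universe v u

/-- **Markov's Rule** (Corollary 1): in a Gödel hyperdoctrine in which the bottom element of
each fibre is quantifier-free, for every quantifier-free `α_D ∈ P(A × B)`, if
`b:B | ⊤ ⊢ ¬∀a.α_D(a,b)` then `b:B | ⊤ ⊢ ∃a.¬α_D(a,b)`. -/
theorem GoedelHyperdoctrine.markov_rule {C : Type u} [Category.{v} C]
    [CartesianMonoidalCategory C] [MonoidalClosed C] (D : GoedelHyperdoctrine C)
    (hbot : ∀ I : C, D.toEUHyperdoctrine.QFree (⊥ : D.obj I))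
    {A B : C} (αD : D.obj (A ⊗ B))
    (hα : D.toEUHyperdoctrine.QFree αD)
    (h : ⊤ ≤ (D.all2 αD)ᶜ) :
    ⊤ ≤ D.ex2 αDᶜ := by
  have hall : D.all2 αD ≤ ⊥ := by
    rw [← himp_bot, le_himp_iff, top_inf_eq] at h
    exact h
  let β : D.obj (B ⊗ A) := D.map (lift (snd B A) (fst B A)) αD
  have hβ : D.toEUHyperdoctrine.ExFree β := by
    intro X f
    have := hα.1 X (f ≫ lift (snd B A) (fst B A))
    rw [D.map_comp] at this
    exact this
  have hβbot : D.all1 β ≤ ⊥ := by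
    refine le_trans ?_ hall
    refine (D.all2_gc A B _ _).mp ?_
    have h1 : D.map (fst B A) (D.all1 β) ≤ β := (D.all1_gc B A _ _).mpr le_rfl
    have h2 := D.map_mono (lift (snd A B) (fst A B)) h1
    have e1 : lift (snd A B) (fst A B) ≫ fst B A = snd A B := by simp
    have e2 : lift (snd A B) (fst A B) ≫ lift (snd B A) (fst B A) = 𝟙 (A ⊗ B) := by
      ext <;> simp
    have h3 : D.map (lift (snd A B) (fst A B)) β = αD := by
      show D.map _ (D.map _ αD) = αD
      rw [← D.map_comp, e2, D.map_id]
    rw [← D.map_comp, e1, h3] at h2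
    exact h2
  have hs := (hbot B).2 B (𝟙 B)
  rw [D.map_id] at hs
  obtain ⟨g, hg⟩ := hs A β hβ hβbot
  have e3 : lift (𝟙 B) g ≫ lift (snd B A) (fst B A) = lift g (𝟙 B) := by
    ext <;> simp
  have hg' : D.map (lift g (𝟙 B)) αD = ⊥ := by
    rw [← e3, D.map_comp]
    exact le_bot_iff.mp hg
  have h4 : αDᶜ ≤ D.map (snd A B) (D.ex2 αDᶜ) := (D.ex2_gc A B _ _).mp le_rfl
  have h5 := D.map_mono (lift g (𝟙 B)) h4
  have e4 : lift g (𝟙 B) ≫ snd A B = 𝟙 B := by simp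
  rw [← D.map_comp, e4, D.map_id, ← himp_bot αD, D.map_himp, hg', himp_bot, D.map_bot,
    himp_self] at h5
  exact h5
end
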